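/- The languages L_a = {w ∈ {a,b,c}* \ {ε} : |w|_c > |w|_a} and L_b = {w ∈ {a,b,c}* \ {ε} : |w|_c > |w|_b} are each binary-PODWA-recognizable (each by a DWA with a single state), but their union L_a ∪ L_b is not binary-PODWA-recognizable. Hence the class of binary-PODWA-recognizable languages is not closed under union. -/

import Mathlib

/-- A deterministic weighted automaton (DWA) over alphabet `A` with state space `Q`. -/
structure DWA (A : Type) (Q : Type) where
  init : Q
  δ : Q → A → Q
  c : Q → A → ℤ

/-- The extended transition function `δ̂`. -/
def DWA.run {A Q : Type} (M : DWA A Q) (q : Q) (w : List A) : Q :=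
  w.foldl M.δ q

/-- The accumulated weight of the run on `w` starting in state `q`. -/
def DWA.valFrom {A Q : Type} (M : DWA A Q) : Q → List A → ℤ
  | _, [] => 0
  | q, x :: w => M.c q x + M.valFrom (M.δ q x) w

/-- The value `A(w)` of a word: the sum of the weights along the run from the initial state. -/
def DWA.val {A Q : Type} (M : DWA A Q) (w : List A) : ℤ :=
  M.valFrom M.init w

/-- The three-letter alphabet `{a, b, c}`. -/
inductive ABC where
  | a : ABC
  | b : ABC
  | c : ABC
deriving DecidableEq

/-!
If every state reached by reading `u` is fixed by `u`, and likewise for `v`, then within the words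
`uⁱvʲs` with `i, j ≥ 1` each further copy of `u` adds the same weight, and so does each further
copy of `v`. Hence the value of `u²v²s` is the average of the values of `uv³s` and `u³vs`, so if
both of these words have positive value then so has `u²v²s`. In a finite automaton some `n ≠ 0`
makes both `aⁿ` and `bⁿ` idempotent in this sense. With `s = c²ⁿ` the words `aⁿb³ⁿc²ⁿ` and
`a³ⁿbⁿc²ⁿ` belong to the union whereas `a²ⁿb²ⁿc²ⁿ` does not.
-/

theorem exists_ne_zero_isIdempotentElem_pow {M : Type*} [Monoid M] [Finite M] (f : M) :
    ∃ n ≠ 0, IsIdempotentElem (f ^ n) := by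
  -- With the discrete topology, the positive powers of `f` form a compact subsemigroup.
  let _ : TopologicalSpace M := ⊥
  have : DiscreteTopology M := ⟨rfl⟩
  obtain ⟨_, ⟨n, rfl⟩, hn⟩ := exists_idempotent_in_compact_subsemigroup
    (fun _ => continuous_of_discreteTopology) (Set.range fun n => f ^ (n + 1))
    (Set.range_nonempty _) (Set.toFinite _).isCompact (by
      rintro _ ⟨m, rfl⟩ _ ⟨n, rfl⟩
      exact ⟨m + 1 + n, by simp only [← pow_add, add_assoc]⟩)
  exact ⟨n + 1, n.succ_ne_zero, hn⟩

theorem exists_ne_zero_forall_isIdempotentElem_pow (M : Type*) [Monoid M] [Finite M] :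
    ∃ n ≠ 0, ∀ f : M, IsIdempotentElem (f ^ n) := by
  have := Fintype.ofFinite M
  choose n hn hidem using exists_ne_zero_isIdempotentElem_pow (M := M)
  refine ⟨∏ f, n f, Finset.prod_ne_zero_iff.2 fun f _ => hn f, fun f => ?_⟩
  obtain ⟨k, hk⟩ := Finset.dvd_prod_of_mem n (Finset.mem_univ f)
  rw [hk, pow_mul]
  exact (hidem f).pow k

theorem sum_map_single_one {A R : Type*} [DecidableEq A] [AddMonoidWithOne R]
    (x : A) (w : List A) : (w.map (Pi.single x (1 : R))).sum = w.count x := by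
  induction w with
  | nil => simp
  | cons y w ih =>
    rcases eq_or_ne y x with rfl | hyx
    · simp [ih, Nat.add_comm _ 1]
    · simp [ih, hyx]

/-- The language of the words with fewer letters `x` than letters `y`. In the notation of the
paper, `L_a = countLT a c` and `L_b = countLT b c`. -/
def countLT {A : Type*} [DecidableEq A] (x y : A) : Language A :=
  {w | w.count x < w.count y}

theorem mem_countLT {A : Type*} [DecidableEq A] {x y : A} {w : List A} :
    w ∈ countLT x y ↔ w.count x < w.count y :=
  Iff.rfl

namespace DWA

variable {A Q : Type}

theorem run_append (M : DWA A Q) (q : Q) (u v : List A) :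
    M.run q (u ++ v) = M.run (M.run q u) v :=
  List.foldl_append

theorem valFrom_append (M : DWA A Q) (q : Q) (u v : List A) :
    M.valFrom q (u ++ v) = M.valFrom q u + M.valFrom (M.run q u) v := by
  induction u generalizing q with
  | nil => simp [valFrom, run]
  | cons x u ih => simp [valFrom, run, ih, add_assoc]

theorem run_replicate (M : DWA A Q) (q : Q) (n : ℕ) (x : A) :
    M.run q (List.replicate n x) = (M.δ · x)^[n] q := by
  induction n generalizing q with
  | zero => rfl
  | succ _ ih => exact ih (M.δ q x)

/-- The language `L` consists of the words of positive value, up to the empty word, which has no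
value in the paper and is ignored here. -/
def Recognizes (M : DWA A Q) (L : Language A) : Prop :=
  ∀ w : List A, w ≠ [] → (0 < M.val w ↔ w ∈ L)

/-- The single-state automaton in which each letter has a fixed weight. -/
def ofWeight (f : A → ℤ) : DWA A Unit where
  init := ()
  δ _ _ := ()
  c _ := f

theorem val_ofWeight (f : A → ℤ) (w : List A) : (ofWeight f).val w = (w.map f).sum := by
  suffices ∀ q, (ofWeight f).valFrom q w = (w.map f).sum from this ()
  induction w with
  | nil => exact fun _ => rfl
  | cons x w ih => exact fun _ => congrArg (f x + ·) (ih ())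

theorem recognizes_countLT [DecidableEq A] (x y : A) :
    (ofWeight (Pi.single y 1 - Pi.single x 1)).Recognizes (countLT x y) := by
  intro w _
  have hval : (ofWeight (Pi.single y 1 - Pi.single x 1)).val w = w.count y - w.count x := by
    rw [val_ofWeight, ← sum_map_single_one y w, ← sum_map_single_one x w]
    exact Multiset.sum_map_sub (m := (w : Multiset A))
  rw [hval, sub_pos, Nat.cast_lt, mem_countLT]

/-- Reading the word `u` a second time does not change the state, i.e. `u` acts on the states as
an idempotent map. -/
def IsIdempotentWord (M : DWA A Q) (u : List A) : Prop :=
  ∀ q, M.run (M.run q u) u = M.run q u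

theorem exists_ne_zero_isIdempotentWord_replicate [Finite Q] (M : DWA A Q) :
    ∃ n ≠ 0, ∀ x, M.IsIdempotentWord (List.replicate n x) := by
  have : Finite (Function.End Q) := inferInstanceAs (Finite (Q → Q))
  obtain ⟨n, hn, hidem⟩ := exists_ne_zero_forall_isIdempotentElem_pow (Function.End Q)
  refine ⟨n, hn, fun x q => ?_⟩
  simp only [run_replicate]
  exact congrFun (hidem (M.δ · x)) q

theorem IsIdempotentWord.valFrom_add_valFrom {M : DWA A Q} {u v : List A}
    (hu : M.IsIdempotentWord u) (hv : M.IsIdempotentWord v) (q : Q) (s : List A) :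
    M.valFrom q (u ++ v ++ v ++ v ++ s) + M.valFrom q (u ++ u ++ u ++ v ++ s) =
      2 * M.valFrom q (u ++ u ++ v ++ v ++ s) := by
  simp only [valFrom_append, run_append, hu _, hv _]
  ring

theorem Recognizes.mem_of_isIdempotentWord {M : DWA A Q} {L : Language A} (hM : M.Recognizes L)
    {u v s : List A} (hu : M.IsIdempotentWord u) (hv : M.IsIdempotentWord v)
    (huvvv : u ++ v ++ v ++ v ++ s ∈ L) (huuuv : u ++ u ++ u ++ v ++ s ∈ L) :
    u ++ u ++ v ++ v ++ s ∈ L := by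
  by_cases hnil : u ++ u ++ v ++ v ++ s = []
  · simp_all
  · have hval : M.val _ + M.val _ = 2 * M.val _ := hu.valFrom_add_valFrom hv M.init s
    have hpos₁ := (hM _ (by simp_all)).2 huvvv
    have hpos₂ := (hM _ (by simp_all)).2 huuuv
    exact (hM _ hnil).1 (by linarith)

theorem not_recognizes_countLT_add_countLT [DecidableEq A] [Finite Q] {a b c : A} (hab : a ≠ b)
    (hac : a ≠ c) (hbc : b ≠ c) (M : DWA A Q) :
    ¬ M.Recognizes (countLT a c + countLT b c) := by
  intro hM
  obtain ⟨n, hn, hidem⟩ := M.exists_ne_zero_isIdempotentWord_replicate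
  let u := List.replicate n a
  let v := List.replicate n b
  let s := List.replicate (2 * n) c
  have hcount_a : u.count a = n ∧ v.count a = 0 ∧ s.count a = 0 := by
    simp [u, v, s, List.count_replicate, hab.symm, hac.symm]
  have hcount_b : u.count b = 0 ∧ v.count b = n ∧ s.count b = 0 := by
    simp [u, v, s, List.count_replicate, hab, hbc.symm]
  have hcount_c : u.count c = 0 ∧ v.count c = 0 ∧ s.count c = 2 * n := by
    simp [u, v, s, List.count_replicate, hac, hbc]
  have huvvv : u ++ v ++ v ++ v ++ s ∈ countLT a c := by
    simp only [mem_countLT, List.count_append]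
    omega
  have huuuv : u ++ u ++ u ++ v ++ s ∈ countLT b c := by
    simp only [mem_countLT, List.count_append]
    omega
  have huuvv : u ++ u ++ v ++ v ++ s ∉ countLT a c + countLT b c := by
    simp only [Language.mem_add, mem_countLT, List.count_append]
    omega
  exact huuvv (hM.mem_of_isIdempotentWord (hidem a) (hidem b) (.inl huvvv) (.inr huuuv))

end DWA

theorem binary_podwa_not_closed_under_union_general {A : Type} [DecidableEq A] {a b c : A}
    (hab : a ≠ b) (hac : a ≠ c) (hbc : b ≠ c) :
    (∃ M : DWA A Unit, M.Recognizes (countLT a c)) ∧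
    (∃ M : DWA A Unit, M.Recognizes (countLT b c)) ∧
    ¬ ∃ (Q : Type) (_ : Finite Q) (M : DWA A Q), M.Recognizes (countLT a c + countLT b c) :=
  ⟨⟨_, DWA.recognizes_countLT a c⟩, ⟨_, DWA.recognizes_countLT b c⟩,
    fun ⟨_, _, M, hM⟩ => M.not_recognizes_countLT_add_countLT hab hac hbc hM⟩

/-- the languages `L_a = {w ≠ ε : |w|_c > |w|_a}` and
`L_b = {w ≠ ε : |w|_c > |w|_b}` are each recognized by a single-state DWA, but their union is
not binary-PODWA-recognizable; hence the class of binary-PODWA-recognizable languages is not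
closed under union. -/
theorem binary_podwa_not_closed_under_union :
    (∃ M : DWA ABC Unit, ∀ w : List ABC, w ≠ [] →
        (0 < M.val w ↔ w.count ABC.a < w.count ABC.c)) ∧
    (∃ M : DWA ABC Unit, ∀ w : List ABC, w ≠ [] →
        (0 < M.val w ↔ w.count ABC.b < w.count ABC.c)) ∧
    ¬ ∃ (Q : Type) (_ : Fintype Q) (M : DWA ABC Q),
        ∀ w : List ABC, w ≠ [] →
          (0 < M.val w ↔
            (w.count ABC.a < w.count ABC.c ∨ w.count ABC.b < w.count ABC.c)) := by
  obtain ⟨ha, hb, hunion⟩ := binary_podwa_not_closed_under_union_general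
    (a := ABC.a) (b := ABC.b) (c := ABC.c) (by decide) (by decide) (by decide)
  exact ⟨ha, hb, fun ⟨Q, _, M, hM⟩ => hunion ⟨Q, inferInstance, M, hM⟩⟩
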